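/- The 5-strand braid group B₅ contains the direct product of two free groups of rank 2 as a subgroup: the group homomorphism from F₂ × F₂ (the direct product of two copies of the free group on two generators) to B₅ sending the generators of the first factor to σ₁⁴ and σ₂⁴, and the generators of the second factor to σ₄² and d = σ₄σ₃σ₂σ₁²σ₂σ₃σ₄, is injective. -/

import Mathlib

open FreeGroup in
/-- The Artin relators of the 5-strand braid group: `σ_i σ_j = σ_j σ_i` for `|i − j| ≥ 2`
and `σ_i σ_{i+1} σ_i = σ_{i+1} σ_i σ_{i+1}` for `1 ≤ i ≤ 3`. -/
def braidRels5 : Set (FreeGroup (Fin 4)) :=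
  {of 0 * of 2 * (of 2 * of 0)⁻¹,
   of 0 * of 3 * (of 3 * of 0)⁻¹,
   of 1 * of 3 * (of 3 * of 1)⁻¹,
   of 0 * of 1 * of 0 * (of 1 * of 0 * of 1)⁻¹,
   of 1 * of 2 * of 1 * (of 2 * of 1 * of 2)⁻¹,
   of 2 * of 3 * of 2 * (of 3 * of 2 * of 3)⁻¹}

/-- The 5-strand braid group `B₅`, presented with generators `σ₁, σ₂, σ₃, σ₄` and the
Artin relations. -/
abbrev B5 : Type := PresentedGroup braidRels5

/-- The generator `σ_{i+1}` of `B₅` (so `sigma 0 = σ₁`, …, `sigma 3 = σ₄`). -/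
def sigma (i : Fin 4) : B5 := PresentedGroup.of (rels := braidRels5) i

/-- The element `d = σ₄σ₃σ₂σ₁²σ₂σ₃σ₄` of `B₅`. -/
def dElt : B5 :=
  sigma 3 * sigma 2 * sigma 1 * sigma 0 ^ 2 * sigma 1 * sigma 2 * sigma 3

/-- Integer `2 × 2` matrices act on nonzero vectors. -/
abbrev NZ : Type := {v : Fin 2 → ℤ // v ≠ 0}

abbrev U2 : Type := (Matrix (Fin 2) (Fin 2) ℤ)ˣ

abbrev U4 : Type := (Matrix (Fin 4) (Fin 4) ℤ)ˣ

instance actNZ : MulAction U2 NZ where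
  smul g v := ⟨g.1.mulVec v.1, fun h => v.2 (by
    have h2 : (g⁻¹).1.mulVec (g.1.mulVec v.1) = 0 := by rw [h, Matrix.mulVec_zero]
    rw [Matrix.mulVec_mulVec, Units.inv_mul, Matrix.one_mulVec] at h2
    exact h2)⟩
  one_smul v := Subtype.ext (Matrix.one_mulVec v.1)
  mul_smul g h v := Subtype.ext (Matrix.mulVec_mulVec v.1 g.1 h.1).symm

theorem smul_val (g : U2) (v : NZ) : (g • v).1 = g.1.mulVec v.1 := rfl

theorem nz_or (v : NZ) : v.1 0 ≠ 0 ∨ v.1 1 ≠ 0 := by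
  by_contra! h
  apply v.2
  ext i
  fin_cases i
  · exact h.1
  · exact h.2

/-- The images of `σ₁⁴` and `σ₂⁴`. -/
def gen1 : Bool → U2
  | false => ⟨!![1, 0; 4, 1], !![1, 0; -4, 1], by decide, by decide⟩
  | true => ⟨!![1, -4; 0, 1], !![1, 4; 0, 1], by decide, by decide⟩

/-- The images of `σ₄²` and `d`. -/
def gen2 : Bool → U2
  | false => ⟨!![1, -2; 0, 1], !![1, 2; 0, 1], by decide, by decide⟩
  | true => ⟨!![-1, 0; 2, -1], !![-1, 0; -2, -1], by decide, by decide⟩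

def X1 : Bool → Set NZ
  | false => {v | (0 < v.1 0 ∧ v.1 0 ≤ v.1 1) ∨ (v.1 0 < 0 ∧ v.1 1 ≤ v.1 0) ∨ v.1 0 = 0}
  | true => {v | (0 < v.1 1 ∧ v.1 0 ≤ - v.1 1) ∨ (v.1 1 < 0 ∧ - v.1 1 ≤ v.1 0) ∨ v.1 1 = 0}

def Y1 : Bool → Set NZ
  | false => {v | (0 < v.1 0 ∧ v.1 1 < - v.1 0) ∨ (v.1 0 < 0 ∧ - v.1 0 < v.1 1)}
  | true => {v | (0 < v.1 1 ∧ v.1 1 < v.1 0) ∨ (v.1 1 < 0 ∧ v.1 0 < v.1 1)}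

def X2 : Bool → Set NZ
  | false => {v | (0 < v.1 1 ∧ v.1 0 ≤ - v.1 1) ∨ (v.1 1 < 0 ∧ - v.1 1 ≤ v.1 0) ∨ v.1 1 = 0}
  | true => {v | (0 < v.1 0 ∧ v.1 1 < - v.1 0) ∨ (v.1 0 < 0 ∧ - v.1 0 < v.1 1) ∨ v.1 0 = 0}

def Y2 : Bool → Set NZ
  | false => {v | (0 < v.1 1 ∧ v.1 1 < v.1 0) ∨ (v.1 1 < 0 ∧ v.1 0 < v.1 1)}
  | true => {v | (0 < v.1 0 ∧ v.1 0 ≤ v.1 1) ∨ (v.1 0 < 0 ∧ v.1 1 ≤ v.1 0)}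

theorem psi1_inj : Function.Injective (FreeGroup.lift gen1) := by
  refine FreeGroup.injective_lift_of_ping_pong gen1 X1 Y1 ?_ ?_ ?_ ?_ ?_ ?_
  · rintro (_ | _)
    · exact ⟨⟨![0, 1], by decide⟩, by simp [X1]⟩
    · exact ⟨⟨![1, 0], by decide⟩, by simp [X1]⟩
  · rintro (_ | _) (_ | _) h <;> try exact absurd rfl h
    all_goals
      refine Set.disjoint_left.2 fun v h1 h2 => ?_
      have := nz_or v
      simp only [X1, Set.mem_ofPred_eq] at h1 h2
      omega
  · rintro (_ | _) (_ | _) h <;> try exact absurd rfl h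
    all_goals
      refine Set.disjoint_left.2 fun v h1 h2 => ?_
      simp only [Y1, Set.mem_ofPred_eq] at h1 h2
      omega
  · rintro (_ | _) (_ | _)
    all_goals
      refine Set.disjoint_left.2 fun v h1 h2 => ?_
      simp only [X1, Y1, Set.mem_ofPred_eq] at h1 h2
      omega
  · rintro (_ | _) _ ⟨v, hv, rfl⟩
    all_goals
      have := nz_or v
      simp only [Y1, Set.mem_compl_iff, Set.mem_ofPred_eq] at hv
      simp [X1, smul_val, gen1, Matrix.mulVec, dotProduct, Fin.sum_univ_two]
      omega
  · rintro (_ | _) _ ⟨v, hv, rfl⟩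
    all_goals
      have := nz_or v
      simp only [X1, Set.mem_compl_iff, Set.mem_ofPred_eq] at hv
      simp [Y1, smul_val, gen1, Matrix.mulVec, dotProduct, Fin.sum_univ_two]
      omega

theorem psi2_inj : Function.Injective (FreeGroup.lift gen2) := by
  refine FreeGroup.injective_lift_of_ping_pong gen2 X2 Y2 ?_ ?_ ?_ ?_ ?_ ?_
  · rintro (_ | _)
    · exact ⟨⟨![1, 0], by decide⟩, by simp [X2]⟩
    · exact ⟨⟨![0, 1], by decide⟩, by simp [X2]⟩
  · rintro (_ | _) (_ | _) h <;> try exact absurd rfl h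
    all_goals
      refine Set.disjoint_left.2 fun v h1 h2 => ?_
      have := nz_or v
      simp only [X2, Set.mem_ofPred_eq] at h1 h2
      omega
  · rintro (_ | _) (_ | _) h <;> try exact absurd rfl h
    all_goals
      refine Set.disjoint_left.2 fun v h1 h2 => ?_
      simp only [Y2, Set.mem_ofPred_eq] at h1 h2
      omega
  · rintro (_ | _) (_ | _)
    all_goals
      refine Set.disjoint_left.2 fun v h1 h2 => ?_
      simp only [X2, Y2, Set.mem_ofPred_eq] at h1 h2
      omega
  · rintro (_ | _) _ ⟨v, hv, rfl⟩
    all_goals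
      have := nz_or v
      simp only [Y2, Set.mem_compl_iff, Set.mem_ofPred_eq] at hv
      simp [X2, smul_val, gen2, Matrix.mulVec, dotProduct, Fin.sum_univ_two]
      omega
  · rintro (_ | _) _ ⟨v, hv, rfl⟩
    all_goals
      have := nz_or v
      simp only [X2, Set.mem_compl_iff, Set.mem_ofPred_eq] at hv
      simp [Y2, smul_val, gen2, Matrix.mulVec, dotProduct, Fin.sum_univ_two]
      omega

/-- The free group of rank two has trivial centre. -/
theorem free_center (u : FreeGroup Bool) (h : ∀ w, u * w = w * u) : u = 1 := by
  have key : ∀ i, (FreeGroup.lift gen1 u).1 * (gen1 i).1 = (gen1 i).1 * (FreeGroup.lift gen1 u).1 := by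
    intro i
    have := congrArg (fun w => (FreeGroup.lift gen1 w).1) (h (FreeGroup.of i))
    simpa using this
  have hsq : FreeGroup.lift gen1 (u ^ 2) = FreeGroup.lift gen1 1 := by
    rw [map_pow, map_one]
    generalize FreeGroup.lift gen1 u = M at key
    have hf := key false
    have ht := key true
    have f00 := congrFun (congrFun hf 0) 0
    have f10 := congrFun (congrFun hf 1) 0
    have t00 := congrFun (congrFun ht 0) 0
    simp [gen1, Matrix.mul_apply, Fin.sum_univ_two] at f00 f10 t00
    have hdet : IsUnit (M.1.det) := (Matrix.isUnit_iff_isUnit_det _).1 M.isUnit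
    rw [Matrix.det_fin_two] at hdet
    have h01 : M.1 0 1 = 0 := by omega
    have h10 : M.1 1 0 = 0 := by omega
    have h11 : M.1 1 1 = M.1 0 0 := by omega
    rw [h01, h10, h11, mul_zero, sub_zero] at hdet
    have h1 : M.1 0 0 * M.1 0 0 = 1 := by
      rcases Int.isUnit_iff.1 hdet with h | h
      · exact h
      · nlinarith [mul_self_nonneg (M.1 0 0)]
    apply Units.ext
    rw [pow_two]
    ext i j
    fin_cases i <;> fin_cases j <;>
      simp [Matrix.mul_apply, Fin.sum_univ_two, h01, h10, h11, h1]
  have h2 := psi1_inj hsq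
  exact (pow_eq_one_iff_left two_ne_zero).1 h2

theorem inj_of_intertwine (ρ : FreeGroup Bool →* U4) (ψ : FreeGroup Bool →* U2)
    (P : Matrix (Fin 2) (Fin 4) ℤ) (Q : Matrix (Fin 4) (Fin 2) ℤ) (hPQ : P * Q = 1)
    (h : ∀ i, P * (ρ (FreeGroup.of i)).1 = (ψ (FreeGroup.of i)).1 * P)
    (hψ : Function.Injective ψ) : Function.Injective ρ := by
  have key : ∀ w, P * (ρ w).1 = (ψ w).1 * P := by
    intro w
    induction w using FreeGroup.induction_on with
    | C1 => simp
    | of i => exact h i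
    | inv_of i _ =>
      rw [map_inv, map_inv]
      have := h i
      calc P * ((ρ (FreeGroup.of i))⁻¹).1
          = ((ψ (FreeGroup.of i))⁻¹).1 * ((ψ (FreeGroup.of i)).1 * P)
              * ((ρ (FreeGroup.of i))⁻¹).1 := by
            rw [← Matrix.mul_assoc, Units.inv_mul, Matrix.one_mul]
        _ = ((ψ (FreeGroup.of i))⁻¹).1 * P := by
            rw [← this, Matrix.mul_assoc, Matrix.mul_assoc, Units.mul_inv, Matrix.mul_one]
    | mul x y hx hy =>
      rw [map_mul, map_mul, Units.val_mul, Units.val_mul, ← Matrix.mul_assoc, hx,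
        Matrix.mul_assoc, hy, Matrix.mul_assoc]
  rw [injective_iff_map_eq_one]
  intro w hw
  apply (injective_iff_map_eq_one ψ).1 hψ
  have h1 := key w
  rw [hw, Units.val_one, Matrix.mul_one] at h1
  apply Units.ext
  calc (ψ w).1 = (ψ w).1 * (P * Q) := by rw [hPQ, Matrix.mul_one]
    _ = P * Q := by rw [← Matrix.mul_assoc, ← h1]
    _ = 1 := hPQ

/-- The integral (symplectic) Burau matrices at `t = -1`. -/
def burau : Fin 4 → U4
  | 0 => ⟨!![1, -1, 0, 0; 0, 1, 0, 0; 0, 0, 1, 0; 0, 0, 0, 1],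
      !![1, 1, 0, 0; 0, 1, 0, 0; 0, 0, 1, 0; 0, 0, 0, 1], by decide, by decide⟩
  | 1 => ⟨!![1, 0, 0, 0; 1, 1, -1, 0; 0, 0, 1, 0; 0, 0, 0, 1],
      !![1, 0, 0, 0; -1, 1, 1, 0; 0, 0, 1, 0; 0, 0, 0, 1], by decide, by decide⟩
  | 2 => ⟨!![1, 0, 0, 0; 0, 1, 0, 0; 0, 1, 1, -1; 0, 0, 0, 1],
      !![1, 0, 0, 0; 0, 1, 0, 0; 0, -1, 1, 1; 0, 0, 0, 1], by decide, by decide⟩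
  | 3 => ⟨!![1, 0, 0, 0; 0, 1, 0, 0; 0, 0, 1, 0; 0, 0, 1, 1],
      !![1, 0, 0, 0; 0, 1, 0, 0; 0, 0, 1, 0; 0, 0, -1, 1], by decide, by decide⟩

theorem burau_rels : ∀ r ∈ braidRels5, FreeGroup.lift burau r = 1 := by
  intro r hr
  simp only [braidRels5, Set.mem_insert_iff, Set.mem_singleton_iff] at hr
  rcases hr with rfl | rfl | rfl | rfl | rfl | rfl <;>
  · rw [map_mul, map_inv, mul_inv_eq_one]
    simp only [map_mul, FreeGroup.lift_apply_of]
    apply Units.ext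
    simp only [Units.val_mul, burau]
    decide

/-- The representation of `B₅`. -/
def rep : B5 →* U4 := PresentedGroup.toGroup burau_rels

theorem rep_sigma (i : Fin 4) : rep (sigma i) = burau i :=
  PresentedGroup.toGroup.of burau_rels

def f1 : Bool → B5
  | false => sigma 0 ^ 4
  | true => sigma 1 ^ 4

def f2 : Bool → B5
  | false => sigma 3 ^ 2
  | true => dElt

theorem phi1_inj : Function.Injective (FreeGroup.lift f1) := by
  have : Function.Injective (rep.comp (FreeGroup.lift f1)) := by
    refine inj_of_intertwine _ (FreeGroup.lift gen1) !![0, -1, 0, 0; 1, 0, -1, 0]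
      !![0, 1; -1, 0; 0, 0; 0, 0] (by decide) ?_ psi1_inj
    rintro (_ | _) <;>
    · simp only [MonoidHom.comp_apply, FreeGroup.lift_apply_of, f1, map_mul, rep_sigma,
        Units.val_mul, burau, gen1, pow_succ, pow_zero, one_mul]
      decide
  exact Function.Injective.of_comp this

theorem phi2_inj : Function.Injective (FreeGroup.lift f2) := by
  have : Function.Injective (rep.comp (FreeGroup.lift f2)) := by
    refine inj_of_intertwine _ (FreeGroup.lift gen2) !![0, 0, 0, -1; 0, 0, 1, 0]
      !![0, 0; 0, 0; 0, 1; -1, 0] (by decide) ?_ psi2_inj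
    rintro (_ | _) <;>
    · simp only [MonoidHom.comp_apply, FreeGroup.lift_apply_of, f2, dElt, map_mul,
        rep_sigma, Units.val_mul, burau, gen2, pow_succ, pow_zero,
        one_mul]
      decide
  exact Function.Injective.of_comp this

theorem rel_eq {x y : FreeGroup (Fin 4)} (h : x * y⁻¹ ∈ braidRels5) :
    PresentedGroup.mk braidRels5 x = PresentedGroup.mk braidRels5 y := by
  have := PresentedGroup.one_of_mem h
  rwa [map_mul, map_inv, mul_inv_eq_one] at this

theorem c02 : sigma 0 * sigma 2 = sigma 2 * sigma 0 := by
  have h := rel_eq (x := FreeGroup.of 0 * FreeGroup.of 2) (y := FreeGroup.of 2 * FreeGroup.of 0)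
    (by simp [braidRels5])
  simp only [map_mul] at h
  exact h
theorem c03 : sigma 0 * sigma 3 = sigma 3 * sigma 0 := by
  have h := rel_eq (x := FreeGroup.of 0 * FreeGroup.of 3) (y := FreeGroup.of 3 * FreeGroup.of 0)
    (by simp [braidRels5])
  simp only [map_mul] at h
  exact h
theorem c13 : sigma 1 * sigma 3 = sigma 3 * sigma 1 := by
  have h := rel_eq (x := FreeGroup.of 1 * FreeGroup.of 3) (y := FreeGroup.of 3 * FreeGroup.of 1)
    (by simp [braidRels5])
  simp only [map_mul] at h
  exact h
theorem b01 : sigma 0 * sigma 1 * sigma 0 = sigma 1 * sigma 0 * sigma 1 := by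
  have h := rel_eq (x := FreeGroup.of 0 * FreeGroup.of 1 * FreeGroup.of 0) (y := FreeGroup.of 1 * FreeGroup.of 0 * FreeGroup.of 1)
    (by simp [braidRels5])
  simp only [map_mul] at h
  exact h
theorem b12 : sigma 1 * sigma 2 * sigma 1 = sigma 2 * sigma 1 * sigma 2 := by
  have h := rel_eq (x := FreeGroup.of 1 * FreeGroup.of 2 * FreeGroup.of 1) (y := FreeGroup.of 2 * FreeGroup.of 1 * FreeGroup.of 2)
    (by simp [braidRels5])
  simp only [map_mul] at h
  exact h

theorem comm_d0 : Commute (sigma 0) dElt := by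
  have h1 : Commute (sigma 0) (sigma 1 * sigma 0 ^ 2 * sigma 1) := by
    change _ = _
    calc sigma 0 * (sigma 1 * sigma 0 ^ 2 * sigma 1)
        = (sigma 0 * sigma 1 * sigma 0) * (sigma 0 * sigma 1) := by simp only [pow_two, mul_assoc]
      _ = sigma 1 * sigma 0 * (sigma 1 * sigma 0 * sigma 1) := by rw [b01]; simp only [pow_two, mul_assoc]
      _ = sigma 1 * sigma 0 ^ 2 * sigma 1 * sigma 0 := by rw [← b01]; simp only [pow_two, mul_assoc]
  have h2 : Commute (sigma 0) (sigma 2) := c02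
  have h3 : Commute (sigma 0) (sigma 3) := c03
  have : dElt = sigma 3 * sigma 2 * (sigma 1 * sigma 0 ^ 2 * sigma 1) * sigma 2 * sigma 3 := by
    unfold dElt; simp only [pow_two, mul_assoc]
  rw [this]
  exact (((h3.mul_right h2).mul_right h1).mul_right h2).mul_right h3

theorem comm_d1 : Commute (sigma 1) dElt := by
  have h0 : sigma 0 ^ 2 * sigma 2 = sigma 2 * sigma 0 ^ 2 :=
    (show Commute (sigma 0) (sigma 2) from c02).pow_left 2
  have h1 : Commute (sigma 1) (sigma 2 * sigma 1 * sigma 0 ^ 2 * sigma 1 * sigma 2) := by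
    change _ = _
    calc sigma 1 * (sigma 2 * sigma 1 * sigma 0 ^ 2 * sigma 1 * sigma 2)
        = (sigma 1 * sigma 2 * sigma 1) * (sigma 0 ^ 2 * sigma 1 * sigma 2) := by simp only [pow_two, mul_assoc]
      _ = sigma 2 * sigma 1 * (sigma 2 * sigma 0 ^ 2) * (sigma 1 * sigma 2) := by
          rw [b12]; simp only [pow_two, mul_assoc]
      _ = sigma 2 * sigma 1 * sigma 0 ^ 2 * (sigma 2 * sigma 1 * sigma 2) := by
          rw [← h0]; simp only [pow_two, mul_assoc]
      _ = sigma 2 * sigma 1 * sigma 0 ^ 2 * sigma 1 * sigma 2 * sigma 1 := by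
          rw [← b12]; simp only [pow_two, mul_assoc]
  have h3 : Commute (sigma 1) (sigma 3) := c13
  have : dElt = sigma 3 * (sigma 2 * sigma 1 * sigma 0 ^ 2 * sigma 1 * sigma 2) * sigma 3 := by
    unfold dElt; simp only [pow_two, mul_assoc]
  rw [this]
  exact (h3.mul_right h1).mul_right h3

theorem comm_gen (i j : Bool) : Commute (f1 i) (f2 j) := by
  cases i <;> cases j
  · exact (show Commute (sigma 0) (sigma 3) from c03).pow_pow 4 2
  · exact comm_d0.pow_left 4
  · exact (show Commute (sigma 1) (sigma 3) from c13).pow_pow 4 2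
  · exact comm_d1.pow_left 4

theorem commute_lift {f : Bool → B5} {g : B5} (h : ∀ i, Commute (f i) g) (w : FreeGroup Bool) :
    Commute (FreeGroup.lift f w) g := by
  induction w using FreeGroup.induction_on with
  | C1 => simp
  | of i => simpa using h i
  | inv_of i _ => simpa using (h i)
  | mul x y hx hy => rw [map_mul]; exact hx.mul_left hy

theorem comm_all (u v : FreeGroup Bool) :
    Commute (FreeGroup.lift f1 u) (FreeGroup.lift f2 v) :=
  commute_lift (fun i => (commute_lift (fun j => (comm_gen i j).symm) v).symm) u


/-- `B₅` contains the direct product of two free groups of rank 2 as a subgroup: the group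
homomorphism `F₂ × F₂ → B₅` sending the generators of the first factor to `σ₁⁴` and `σ₂⁴`
and the generators of the second factor to `σ₄²` and `d = σ₄σ₃σ₂σ₁²σ₂σ₃σ₄` is injective. -/
theorem braid_B5_contains_product_of_free_groups :
    ∃ φ : FreeGroup Bool × FreeGroup Bool →* B5,
      φ (FreeGroup.of false, 1) = sigma 0 ^ 4 ∧
      φ (FreeGroup.of true, 1) = sigma 1 ^ 4 ∧
      φ (1, FreeGroup.of false) = sigma 3 ^ 2 ∧
      φ (1, FreeGroup.of true) = dElt ∧
      Function.Injective φ := by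
  refine ⟨MonoidHom.noncommCoprod (FreeGroup.lift f1) (FreeGroup.lift f2) comm_all,
    by simp [f1], by simp [f1], by simp [f2], by simp [f2], ?_⟩
  rw [injective_iff_map_eq_one]
  rintro ⟨u, v⟩ h
  rw [MonoidHom.noncommCoprod_apply] at h
  simp only at h
  have hu : u = 1 := by
    apply free_center
    intro w
    apply phi1_inj
    rw [map_mul, map_mul, eq_inv_of_mul_eq_one_left h]
    exact ((comm_all w v).inv_right).symm
  rw [hu, map_one, one_mul, ← map_one (FreeGroup.lift f2)] at h
  rw [hu, phi2_inj h]
  rfl
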